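/- Let P, Q, P', Q' be integral polytopes in ℝ^n. Then P + Q' = P' + Q (Minkowski sum, as subsets of ℝ^n) if and only if for every group homomorphism φ : ℤ^n → ℤ, with φ_ℝ its ℝ-linear extension, one has φ_ℝ(P) + φ_ℝ(Q') = φ_ℝ(P') + φ_ℝ(Q) as subsets of ℝ. (This expresses the injectivity of the map ξ from the Grothendieck group of integral polytopes P_ℤ(H) to the product over all φ ∈ Hom(H,ℤ) of P_ℤ(ℤ).) -/

import Mathlib

/-!
Since `φ_ℝ` is additive, it suffices that a compact convex set `B` is determined by its images under
integral functionals. A point `x ∉ B` is strictly separated from `B` by some `w ∈ ℝ^n`. As `B` is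
compact, separation is an open condition on `w`, so `⌊t w⌋ / t` also separates for `t` large, and
hence so does its positive multiple, the integral vector `⌊t w⌋`.
-/

open Pointwise

/-- An integral polytope in `ℝ^n`: the convex hull of a nonempty finite
subset of the lattice `ℤ^n ⊆ ℝ^n`. -/
def IsIntegralPolytope {n : ℕ} (P : Set (Fin n → ℝ)) : Prop :=
  ∃ S : Finset (Fin n → ℤ), S.Nonempty ∧
    P = convexHull ℝ ((fun z : Fin n → ℤ => fun i => (z i : ℝ)) '' (S : Set (Fin n → ℤ)))

/-- The `ℝ`-linear extension of a group homomorphism `φ : ℤ^n → ℤ`. -/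
noncomputable def extendR {n : ℕ} (φ : (Fin n → ℤ) →+ ℤ) : (Fin n → ℝ) → ℝ :=
  fun x => ∑ i, x i * ((φ (Pi.single i 1) : ℤ) : ℝ)

section Separation

open Filter Topology

lemma tendsto_intFloor_mul_div_atTop {R : Type*} [TopologicalSpace R] [Field R] [LinearOrder R]
    [IsStrictOrderedRing R] [OrderTopology R] [FloorRing R] (a : R) :
    Tendsto (fun t : R ↦ (⌊a * t⌋ : R) / t) atTop (𝓝 a) := by
  have lower : Tendsto (fun t : R ↦ a - t⁻¹) atTop (𝓝 a) := by
    simpa using (tendsto_const_nhds (x := a)).sub tendsto_inv_atTop_zero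
  refine tendsto_of_tendsto_of_tendsto_of_le_of_le' lower tendsto_const_nhds ?_ ?_
  · filter_upwards [eventually_gt_atTop 0] with t ht
    rw [le_div_iff₀ ht, sub_mul, inv_mul_cancel₀ ht.ne']
    exact (Int.sub_one_lt_floor _).le
  · filter_upwards [eventually_gt_atTop 0] with t ht
    exact (div_le_iff₀ ht).2 (Int.floor_le _)

lemma isOpen_setOf_forall_mem_lt {X Y α : Type*} [TopologicalSpace X] [TopologicalSpace Y]
    [TopologicalSpace α] [LinearOrder α] [OrderClosedTopology α] {K : Set Y} {f g : X × Y → α}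
    (hK : IsCompact K) (hf : Continuous f) (hg : Continuous g) :
    IsOpen {x | ∀ y ∈ K, f (x, y) < g (x, y)} :=
  isOpen_iff_eventually.2 fun _ hx ↦ hK.eventually_forall_of_forall_eventually fun y hy ↦
    hf.continuousAt.eventually_lt hg.continuousAt (hx y hy)

variable {ι : Type*} [Fintype ι] {B : Set (ι → ℝ)} {x : ι → ℝ}

lemma exists_forall_dotProduct_lt (hBclosed : IsClosed B) (hBconvex : Convex ℝ B) (hx : x ∉ B) :
    ∃ w : ι → ℝ, ∀ b ∈ B, w ⬝ᵥ b < w ⬝ᵥ x := by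
  classical
  obtain ⟨f, u, hfB, hfx⟩ := geometric_hahn_banach_closed_point hBconvex hBclosed hx
  obtain ⟨w, hw⟩ := (dotProductEquiv ℝ ι).surjective f.toLinearMap
  have hf (y : ι → ℝ) : w ⬝ᵥ y = f y := LinearMap.congr_fun hw y
  refine ⟨w, fun b hb ↦ ?_⟩
  rw [hf, hf]
  exact (hfB b hb).trans hfx

lemma exists_int_forall_dotProduct_lt (hBcompact : IsCompact B) (hBconvex : Convex ℝ B)
    (hx : x ∉ B) : ∃ z : ι → ℤ, ∀ b ∈ B, (fun i ↦ (z i : ℝ)) ⬝ᵥ b < (fun i ↦ (z i : ℝ)) ⬝ᵥ x := by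
  obtain ⟨w, hw⟩ := exists_forall_dotProduct_lt hBcompact.isClosed hBconvex hx
  have approx : Tendsto (fun (t : ℝ) i ↦ (⌊w i * t⌋ : ℝ) / t) atTop (𝓝 w) :=
    tendsto_pi_nhds.2 fun i ↦ tendsto_intFloor_mul_div_atTop (w i)
  have separating_isOpen : IsOpen {v : ι → ℝ | ∀ b ∈ B, v ⬝ᵥ b < v ⬝ᵥ x} :=
    isOpen_setOf_forall_mem_lt hBcompact (continuous_fst.dotProduct continuous_snd)
      (continuous_fst.dotProduct continuous_const)
  have eventually_separating := approx.eventually (separating_isOpen.eventually_mem hw)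
  obtain ⟨t, ht, htpos⟩ := (eventually_separating.and (eventually_gt_atTop 0)).exists
  refine ⟨fun i ↦ ⌊w i * t⌋, fun b hb ↦ ?_⟩
  have scale : (fun i ↦ (⌊w i * t⌋ : ℝ)) = t • fun i ↦ (⌊w i * t⌋ : ℝ) / t := by
    ext i
    exact (mul_div_cancel₀ _ htpos.ne').symm
  rw [scale, smul_dotProduct, smul_dotProduct]
  exact smul_lt_smul_of_pos_left (ht b hb) htpos

end Separation

section IntegralFunctionals

variable {n : ℕ}

lemma extendR_add (φ : (Fin n → ℤ) →+ ℤ) (x y : Fin n → ℝ) :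
    extendR φ (x + y) = extendR φ x + extendR φ y := by
  simp [extendR, add_mul, Finset.sum_add_distrib]

lemma extendR_image_add (φ : (Fin n → ℤ) →+ ℤ) (A B : Set (Fin n → ℝ)) :
    extendR φ '' (A + B) = extendR φ '' A + extendR φ '' B :=
  Set.image_image2_distrib (extendR_add φ)

lemma extendR_linearCombination (z : Fin n → ℤ) (x : Fin n → ℝ) :
    extendR (Fintype.linearCombination ℤ z).toAddMonoidHom x = (fun i ↦ (z i : ℝ)) ⬝ᵥ x := by
  simp [extendR, dotProduct, Fintype.linearCombination_apply_single, mul_comm]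

variable {A B : Set (Fin n → ℝ)}

lemma subset_of_forall_extendR_image_subset (hBcompact : IsCompact B) (hBconvex : Convex ℝ B)
    (h : ∀ φ : (Fin n → ℤ) →+ ℤ, extendR φ '' A ⊆ extendR φ '' B) : A ⊆ B := by
  intro x hxA
  by_contra hxB
  obtain ⟨z, hz⟩ := exists_int_forall_dotProduct_lt hBcompact hBconvex hxB
  obtain ⟨b, hb, hbx⟩ := h (Fintype.linearCombination ℤ z).toAddMonoidHom ⟨x, hxA, rfl⟩
  rw [extendR_linearCombination, extendR_linearCombination] at hbx
  exact (hz b hb).ne hbx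

lemma eq_iff_forall_extendR_image_eq (hAcompact : IsCompact A) (hAconvex : Convex ℝ A)
    (hBcompact : IsCompact B) (hBconvex : Convex ℝ B) :
    A = B ↔ ∀ φ : (Fin n → ℤ) →+ ℤ, extendR φ '' A = extendR φ '' B := by
  refine ⟨fun h φ ↦ h ▸ rfl, fun h ↦ Set.Subset.antisymm ?_ ?_⟩
  · exact subset_of_forall_extendR_image_subset hBcompact hBconvex fun φ ↦ (h φ).subset
  · exact subset_of_forall_extendR_image_subset hAcompact hAconvex fun φ ↦ (h φ).superset

end IntegralFunctionals

namespace IsIntegralPolytope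

variable {n : ℕ} {P : Set (Fin n → ℝ)}

lemma isCompact (hP : IsIntegralPolytope P) : IsCompact P := by
  obtain ⟨S, -, rfl⟩ := hP
  exact (S.finite_toSet.image _).isCompact_convexHull ℝ

lemma convex (hP : IsIntegralPolytope P) : Convex ℝ P := by
  obtain ⟨S, -, rfl⟩ := hP
  exact convex_convexHull ℝ _

end IsIntegralPolytope

theorem universal_L2_torsion_polytope_xi_injective_general {n : ℕ} {P Q P' Q' : Set (Fin n → ℝ)}
    (hPcompact : IsCompact P) (hPconvex : Convex ℝ P)
    (hQcompact : IsCompact Q) (hQconvex : Convex ℝ Q)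
    (hP'compact : IsCompact P') (hP'convex : Convex ℝ P')
    (hQ'compact : IsCompact Q') (hQ'convex : Convex ℝ Q') :
    P + Q' = P' + Q ↔
      ∀ φ : (Fin n → ℤ) →+ ℤ,
        extendR φ '' P + extendR φ '' Q' = extendR φ '' P' + extendR φ '' Q := by
  simp only [← extendR_image_add]
  exact eq_iff_forall_extendR_image_eq (hPcompact.add hQ'compact) (hPconvex.add hQ'convex)
    (hP'compact.add hQcompact) (hP'convex.add hQconvex)

/-- For integral polytopes `P, Q, P', Q'` in `ℝ^n`, the Minkowski sums satisfy
`P + Q' = P' + Q` iff for every homomorphism `φ : ℤ^n → ℤ` (with `ℝ`-linear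
extension `φ_ℝ`) one has `φ_ℝ(P) + φ_ℝ(Q') = φ_ℝ(P') + φ_ℝ(Q)` in `ℝ`. -/
theorem universal_L2_torsion_polytope_xi_injective {n : ℕ}
    (P Q P' Q' : Set (Fin n → ℝ))
    (hP : IsIntegralPolytope P) (hQ : IsIntegralPolytope Q)
    (hP' : IsIntegralPolytope P') (hQ' : IsIntegralPolytope Q') :
    P + Q' = P' + Q ↔
      ∀ φ : (Fin n → ℤ) →+ ℤ,
        extendR φ '' P + extendR φ '' Q' = extendR φ '' P' + extendR φ '' Q := by
  exact universal_L2_torsion_polytope_xi_injective_general hP.isCompact hP.convex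
    hQ.isCompact hQ.convex hP'.isCompact hP'.convex hQ'.isCompact hQ'.convex
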